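/- arXiv:2208.02363 — 2 statements merged into one kernel-verified Lean document; each statement's English description precedes it below -/
import Mathlib

section
/- For every ν ∈ (0,1), the function ψ_ν is nonnegative on (0,∞): ψ_ν(Θ) ≥ 0 for all Θ > 0; consequently φ_ν(Θ) ≥ 0 for all Θ > 0, so that φ_ν is a probability density once its integral equals 1. -/
/-!
`ψ_ν` is the density of the one-sided `ν`-stable law, whose characteristic function is
`χ(s) = e^(-(is)^ν)`. The proof shows that `ψ_ν` is the inverse Fourier transform of `χ`, and that
this inverse transform is nonnegative because `χ` is a limit of generating functions with nonnegative
coefficients.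

*Positivity.* The function `f(z) = 1 - (1 - z)^ν` has nonnegative power series coefficients
(`sibuya_nonneg`, `sibuya_hasSum`). Hence `f(e^(-(h+is)h))^N` is a nonnegative combination of the
exponentials `e^(-ishk)`, and its inverse Fourier transform, regularised by `e^(-εs²)`, is a
nonnegative combination of shifted Gaussians (`fourier_pow_nonneg`). With `h = N^(-1/ν)` these
functions converge to `χ` (`sibuyaGen_pow_tendsto`); letting `N → ∞` and then `ε → 0` gives
`Re ∫_0^∞ e^(isΘ) χ(s) ds ≥ 0` (`half_line_nonneg`).

*Identification.* For `s > 0` one has `χ(s) = e^(-c s^ν)` with `c = e^(iπν/2)`. For `Re w > 0`, the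
integral `∫_0^∞ e^(-ws) e^(-c s^ν) ds` is computed termwise as
`Σ (-c)^n / n! Γ(nν+1) w^(-nν-1)` (`laplace_hasSum`), and both sides extend continuously to
`w = -iΘ` (`boundary_hasSum`). There the real part of the series is `π ψ_ν(Θ)` (`serTerm_re`).
-/

/-- The `n`-th term (for original index `n+1 ≥ 1`) of the series defining the
Wright-type function `ψ_ν`. -/
noncomputable def wrightTerm (ν Θ : ℝ) (n : ℕ) : ℝ :=
  (-1 : ℝ) ^ n * Θ ^ (-(ν * (n + 1 : ℝ)) - 1) *
    (Real.Gamma ((n + 1 : ℝ) * ν + 1) / (Nat.factorial (n + 1) : ℝ)) *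
    Real.sin ((n + 1 : ℝ) * Real.pi * ν)

/-- The Wright-type function
`ψ_ν(Θ) = (1/π) Σ_{n=1}^∞ (-1)^{n-1} Θ^{-νn-1} (Γ(nν+1)/n!) sin(nπν)`. -/
noncomputable def psiNu (ν Θ : ℝ) : ℝ :=
  (1 / Real.pi) * ∑' n : ℕ, wrightTerm ν Θ n

/-- The probability density `φ_ν(Θ) = (1/ν) Θ^{-1-1/ν} ψ_ν(Θ^{-1/ν})`. -/
noncomputable def phiNu (ν Θ : ℝ) : ℝ :=
  (1 / ν) * Θ ^ (-1 - 1 / ν) * psiNu ν (Θ ^ (-(1 / ν)))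

section

open Filter Topology MeasureTheory

/-! ### The Sibuya distribution -/

/-- The Sibuya weights `(-1)^(k+1) (ν choose k)`, `k ≥ 1`: the power series coefficients of
`1 - (1 - z)^ν`. The constant coefficient is `0`. -/
noncomputable def sibuya (ν : ℝ) (k : ℕ) : ℝ :=
  if k = 0 then 0 else (-1) ^ (k + 1) * Ring.choose ν k

lemma choose_succ_mul (ν : ℝ) (k : ℕ) :
    Ring.choose ν (k + 1) * (k + 1) = Ring.choose ν k * (ν - k) := by
  have h1 := Ring.descPochhammer_eq_factorial_smul_choose ν (k + 1)
  have h2 := Ring.descPochhammer_eq_factorial_smul_choose ν k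
  rw [descPochhammer_succ_right, Polynomial.smeval_mul, h2] at h1
  have h3 : (k.factorial : ℝ) ≠ 0 := by positivity
  simp [Polynomial.smeval_natCast, Nat.factorial_succ] at h1
  apply mul_left_cancel₀ h3
  linarith

lemma sibuya_nonneg {ν : ℝ} (h0 : 0 < ν) (h1 : ν < 1) (k : ℕ) : 0 ≤ sibuya ν k := by
  rcases k with _ | k
  · simp [sibuya]
  · simp only [sibuya, Nat.succ_ne_zero, if_false]
    induction k with
    | zero => simpa using h0.le
    | succ k ih =>
      have h := choose_succ_mul ν (k + 1)
      have : (-1 : ℝ) ^ (k + 1 + 1 + 1) * Ring.choose ν (k + 1 + 1) =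
          ((-1) ^ (k + 1 + 1) * Ring.choose ν (k + 1)) * (((k + 1 : ℕ) - ν) / ((k + 1 : ℕ) + 1)) := by
        have : ((k + 1 : ℕ) + 1 : ℝ) ≠ 0 := by positivity
        field_simp
        rw [pow_succ _ (k + 1 + 1)]
        linear_combination (-(-1 : ℝ) ^ (k + 1 + 1)) * h
      rw [this]
      refine mul_nonneg ih (div_nonneg ?_ (by positivity))
      push_cast
      have : (0 : ℝ) ≤ k := k.cast_nonneg
      linarith

/-- The generating function `1 - (1 - z)^ν` of the Sibuya weights, with the principal branch. -/
noncomputable def sibuyaGen (ν : ℝ) (z : ℂ) : ℂ := 1 - (1 - z) ^ (ν : ℂ)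

lemma sibuya_hasSum (ν : ℝ) {z : ℂ} (hz : ‖z‖ < 1) :
    HasSum (fun k => (sibuya ν k : ℂ) * z ^ k) (sibuyaGen ν z) := by
  have h := (Complex.one_add_cpow_hasFPowerSeriesOnBall_zero (a := (ν : ℂ))).hasSum (y := -z)
    (by
      rw [← ENNReal.ofReal_one, Metric.eball_ofReal]
      simpa using hz)
  simp only [binomialSeries_apply, List.ofFn_const, List.prod_replicate, zero_add, smul_eq_mul] at h
  have h2 := (hasSum_single (f := fun k : ℕ => if k = 0 then (1 : ℂ) else 0) 0 (by
    intro b hb; simp [hb])).sub h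
  simp only [if_true] at h2
  rw [sibuyaGen, sub_eq_add_neg 1 z]
  convert! h2 using 2 with k
  rcases k with _ | k
  · simp [sibuya]
  · simp only [sibuya, Nat.succ_ne_zero, if_false]
    push_cast
    rw [neg_pow z, pow_succ (-1 : ℂ) (k + 1)]
    ring

/-- Since the coefficients are nonnegative, `|f(z)| ≤ f(|z|) = 1 - (1 - |z|)^ν ≤ 1`. -/
lemma norm_sibuyaGen_le {ν : ℝ} (h0 : 0 < ν) (h1 : ν < 1) {z : ℂ} (hz : ‖z‖ < 1) :
    ‖sibuyaGen ν z‖ ≤ 1 := by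
  have h := sibuya_hasSum ν (z := (‖z‖ : ℂ)) (by simpa using hz)
  have e : sibuyaGen ν (‖z‖ : ℂ) = ((1 - (1 - ‖z‖) ^ ν : ℝ) : ℂ) := by
    rw [sibuyaGen]; push_cast
    rw [Complex.ofReal_cpow (by linarith)]
    simp
  rw [e] at h
  have h' : HasSum (fun k => sibuya ν k * ‖z‖ ^ k) (1 - (1 - ‖z‖) ^ ν) := by
    exact_mod_cast h
  have := (sibuya_hasSum ν hz).norm_le_of_bounded h' (fun k => by
    rw [norm_mul, norm_pow, Complex.norm_real, Real.norm_of_nonneg (sibuya_nonneg h0 h1 k)])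
  have h3 : 0 ≤ (1 - ‖z‖) ^ ν := Real.rpow_nonneg (by linarith) _
  linarith

/-! ### Positivity at the discrete level -/

/-- Nonnegativity of the Gaussian-regularised Fourier integral of the `n`-th power of the Sibuya
generating function along `z = e^(-(h+is)h)`. Each additional factor is a nonnegative combination of
the exponentials `e^(-ishk)`, which only shift the Fourier variable `x` to `x - hk`; for `n = 0` the
integral is the Fourier transform of a Gaussian. -/
lemma fourier_pow_nonneg {ν : ℝ} (h0 : 0 < ν) (h1 : ν < 1) {ε h : ℝ} (hε : 0 < ε) (hh : 0 < h)
    (n : ℕ) (x : ℝ) :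
    0 ≤ (∫ s : ℝ, Complex.exp (Complex.I * x * s) * Complex.exp (-ε * s ^ 2) *
      sibuyaGen ν (Complex.exp (-((h + Complex.I * s) * h))) ^ n).re := by
  have hz : ∀ s : ℝ, ‖Complex.exp (-((h + Complex.I * s) * h))‖ = Real.exp (- (h * h)) := by
    intro s; rw [Complex.norm_exp]; simp
  have hz1 : ∀ s : ℝ, ‖Complex.exp (-((h + Complex.I * s) * h))‖ < 1 := by
    intro s; rw [hz, Real.exp_lt_one_iff]; nlinarith
  have hg : ∀ s : ℝ, ‖Complex.exp (-ε * s ^ 2)‖ = Real.exp (-ε * s ^ 2) := by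
    intro s; rw [Complex.norm_exp]; norm_cast
  have hx : ∀ x s : ℝ, ‖Complex.exp (Complex.I * x * s)‖ = 1 := by
    intro x s; rw [Complex.norm_exp]; simp
  have hmeas : ∀ (x : ℝ) (n : ℕ), Continuous (fun s : ℝ =>
      Complex.exp (Complex.I * x * s) * Complex.exp (-ε * s ^ 2) *
      sibuyaGen ν (Complex.exp (-((h + Complex.I * s) * h))) ^ n) := by
    intro x n
    have : Continuous fun s : ℝ => sibuyaGen ν (Complex.exp (-((h + Complex.I * s) * h))) := by
      unfold sibuyaGen
      refine continuous_const.sub (Continuous.cpow (by fun_prop) continuous_const fun s => ?_)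
      rw [sub_eq_add_neg]
      exact Complex.mem_slitPlane_of_norm_lt_one (by simpa using hz1 s)
    fun_prop
  have hbound : ∀ (x : ℝ) (n : ℕ) (s : ℝ), ‖Complex.exp (Complex.I * x * s) *
      Complex.exp (-ε * s ^ 2) * sibuyaGen ν (Complex.exp (-((h + Complex.I * s) * h))) ^ n‖
      ≤ Real.exp (-ε * s ^ 2) := by
    intro x n s
    rw [norm_mul, norm_mul, hx, hg, one_mul, norm_pow]
    exact mul_le_of_le_one_right (Real.exp_nonneg _)
      (pow_le_one₀ (norm_nonneg _) (norm_sibuyaGen_le h0 h1 (hz1 s)))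
  have hint : ∀ (x : ℝ) (n : ℕ), Integrable (fun s : ℝ =>
      Complex.exp (Complex.I * x * s) * Complex.exp (-ε * s ^ 2) *
      sibuyaGen ν (Complex.exp (-((h + Complex.I * s) * h))) ^ n) := fun x n =>
    (integrable_exp_neg_mul_sq hε).mono' (hmeas x n).aestronglyMeasurable
      (ae_of_all _ (hbound x n))
  induction n generalizing x with
  | zero =>
    have := fourierIntegral_gaussian (b := (ε : ℂ)) (by simpa using hε) (x : ℂ)
    simp only [pow_zero, mul_one]
    rw [this]
    have e : ((Real.pi : ℂ) / ε) ^ (1 / 2 : ℂ) * Complex.exp (-(x : ℂ) ^ 2 / (4 * ε)) =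
        (((Real.pi / ε) ^ (1 / 2 : ℝ) * Real.exp (- x ^ 2 / (4 * ε)) : ℝ) : ℂ) := by
      push_cast
      rw [Complex.ofReal_cpow (by positivity)]
      push_cast
      rfl
    rw [e, Complex.ofReal_re]
    positivity
  | succ n ih =>
    set F : ℕ → ℝ → ℂ := fun k s => ((sibuya ν k * Real.exp (-(h * h)) ^ k : ℝ) : ℂ) *
      (Complex.exp (Complex.I * (x - h * k : ℝ) * s) * Complex.exp (-ε * s ^ 2) *
      sibuyaGen ν (Complex.exp (-((h + Complex.I * s) * h))) ^ n) with hF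
    have hsum : Summable fun k => sibuya ν k * Real.exp (-(h * h)) ^ k := by
      have := (sibuya_hasSum ν (hz1 0)).summable.norm
      simpa only [norm_mul, norm_pow, hz, Complex.norm_real,
        Real.norm_of_nonneg (sibuya_nonneg h0 h1 _)] using this
    have hnn : ∀ k, 0 ≤ sibuya ν k * Real.exp (-(h * h)) ^ k := fun k =>
      mul_nonneg (sibuya_nonneg h0 h1 k) (by positivity)
    have hFs := hasSum_integral_of_summable_integral_norm (μ := volume) (F := F)
      (fun k => (hint _ n).const_mul _) (by
        refine Summable.of_nonneg_of_le (fun k => integral_nonneg fun s => norm_nonneg _)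
          (fun k => ?_) (hsum.mul_right (∫ s : ℝ, Real.exp (-ε * s ^ 2)))
        rw [← integral_const_mul]
        refine integral_mono ((hint _ n).const_mul _).norm
          ((integrable_exp_neg_mul_sq hε).const_mul _) fun s => ?_
        simp only [hF]
        rw [norm_mul, Complex.norm_real, Real.norm_of_nonneg (hnn k)]
        exact mul_le_mul_of_nonneg_left (hbound _ n s) (hnn k))
    have e : ∀ s : ℝ, ∑' k, F k s = Complex.exp (Complex.I * x * s) * Complex.exp (-ε * s ^ 2) *
        sibuyaGen ν (Complex.exp (-((h + Complex.I * s) * h))) ^ (n + 1) := by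
      intro s
      have := (sibuya_hasSum ν (hz1 s)).mul_left (Complex.exp (Complex.I * x * s) *
        Complex.exp (-ε * s ^ 2) * sibuyaGen ν (Complex.exp (-((h + Complex.I * s) * h))) ^ n)
      rw [pow_succ (sibuyaGen _ _), ← mul_assoc, ← this.tsum_eq]
      refine tsum_congr fun k => ?_
      have e1 : Complex.exp (Complex.I * (x - h * k : ℝ) * s) * Complex.exp (-(h * h)) ^ k =
          Complex.exp (Complex.I * x * s) * Complex.exp (-((h + Complex.I * s) * h)) ^ k := by
        rw [← Complex.exp_nat_mul, ← Complex.exp_nat_mul, ← Complex.exp_add, ← Complex.exp_add]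
        congr 1
        push_cast
        ring
      simp only [hF]
      push_cast
      push_cast at e1
      linear_combination (sibuya ν k * Complex.exp (-ε * s ^ 2) *
        sibuyaGen ν (Complex.exp (-((h + Complex.I * s) * h))) ^ n) * e1
    simp only [e] at hFs
    have hre := Complex.hasSum_re hFs
    refine hre.nonneg fun k => ?_
    simp only [hF]
    rw [integral_const_mul, Complex.re_ofReal_mul]
    exact mul_nonneg (hnn k) (ih _)

/-! ### Convergence to the stable characteristic function -/

lemma ofReal_mul_cpow {a : ℝ} (ha : 0 < a) (w : ℂ) {ν : ℝ} (hν : ν ≠ 0) :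
    ((a : ℂ) * w) ^ (ν : ℂ) = (a : ℂ) ^ (ν : ℂ) * w ^ (ν : ℂ) := by
  have ha' : (a : ℂ) ≠ 0 := by exact_mod_cast ha.ne'
  rcases eq_or_ne w 0 with rfl | hw
  · simp [hν]
  · rw [Complex.cpow_def_of_ne_zero (mul_ne_zero ha' hw), Complex.cpow_def_of_ne_zero ha',
      Complex.cpow_def_of_ne_zero hw, Complex.log_ofReal_mul ha hw, add_mul, Complex.exp_add,
      Complex.ofReal_log ha.le]

/-- Convergence of discrete Sibuya sums to the stable law, on the Fourier side. With `h = N^(-1/ν)`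
one has `(1 - e^(-(h+is)h))^ν ≈ (ish)^ν = (is)^ν / N`, so that the `N`-th power tends to
`e^(-(is)^ν)`. The extra damping `h` in the exponent keeps the argument inside the unit disc. -/
lemma sibuyaGen_pow_tendsto {ν : ℝ} (h0 : 0 < ν) {s : ℝ} (hs : s ≠ 0) :
    Tendsto (fun N : ℕ => sibuyaGen ν (Complex.exp (-((((N : ℝ) ^ (-(1 / ν)) : ℝ) +
      Complex.I * s) * ((N : ℝ) ^ (-(1 / ν)) : ℝ)))) ^ N) atTop
      (𝓝 (Complex.exp (-(Complex.I * s) ^ (ν : ℂ)))) := by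
  have hh : Tendsto (fun N : ℕ => (N : ℝ) ^ (-(1 / ν))) atTop (𝓝[≠] 0) := by
    refine tendsto_nhdsWithin_iff.2
      ⟨(tendsto_rpow_neg_atTop (by positivity)).comp tendsto_natCast_atTop_atTop, ?_⟩
    filter_upwards [eventually_gt_atTop 0] with N hN
    have : (0 : ℝ) < N := by exact_mod_cast hN
    exact (Real.rpow_pos_of_pos this _).ne'
  have hd : HasDerivAt (fun t : ℝ => 1 - Complex.exp (-((t + Complex.I * s) * t)))
      (Complex.I * s) 0 := by
    have h1 : HasDerivAt (fun t : ℝ => (t : ℂ)) 1 0 := Complex.ofRealCLM.hasDerivAt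
    have := ((((h1.add_const (Complex.I * s)).mul h1).neg).cexp).const_sub 1
    simpa using this
  have h2 := (hasDerivAt_iff_tendsto_slope_zero.1 hd).comp hh
  have h3 : Tendsto (fun z : ℂ => z ^ (ν : ℂ)) (𝓝 (Complex.I * s))
      (𝓝 ((Complex.I * s) ^ (ν : ℂ))) :=
    (continuousAt_cpow_const (Or.inr (by simpa using hs))).tendsto
  have h4 := (h3.comp h2).neg
  simp only [sibuyaGen, sub_eq_add_neg (1 : ℂ) ((1 - _) ^ (ν : ℂ))]
  refine Complex.tendsto_one_add_pow_exp_of_tendsto (h4.congr' ?_)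
  filter_upwards [eventually_gt_atTop 0] with N hN
  have hN' : (0 : ℝ) < N := by exact_mod_cast hN
  have hp : (0 : ℝ) < (N : ℝ) ^ (1 / ν) := Real.rpow_pos_of_pos hN' _
  simp only [Function.comp, zero_add, Complex.ofReal_zero, mul_zero, neg_zero, Complex.exp_zero,
    sub_self, sub_zero]
  rw [Real.rpow_neg hN'.le, inv_inv, Complex.real_smul, ofReal_mul_cpow hp _ h0.ne',
    ← Complex.ofReal_cpow hp.le, ← Real.rpow_mul hN'.le, one_div_mul_cancel h0.ne', Real.rpow_one]
  push_cast
  ring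

lemma I_mul_cpow (ν : ℝ) {s : ℝ} (hs : 0 < s) :
    (Complex.I * s) ^ (ν : ℂ) = (s ^ ν : ℝ) * Complex.exp (Complex.I * (Real.pi * ν / 2 : ℝ)) := by
  rw [mul_comm, Complex.cpow_def_of_ne_zero (by simpa using hs.ne'), Complex.log_ofReal_mul hs (by simp),
    Complex.log_I, add_mul, Complex.exp_add, Complex.ofReal_cpow hs.le,
    Complex.cpow_def_of_ne_zero (by simpa using hs.ne'), Complex.ofReal_log hs.le]
  congr 2
  push_cast
  ring

lemma conj_I_cpow (ν s : ℝ) (hs : 0 < s) : (Complex.I * (-s : ℝ)) ^ (ν : ℂ) =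
    (starRingEnd ℂ) ((Complex.I * s) ^ (ν : ℂ)) := by
  have : Complex.I * (-s : ℝ) = (starRingEnd ℂ) (Complex.I * s) := by simp
  rw [this, Complex.conj_cpow, Complex.conj_ofReal]
  rw [mul_comm, Complex.arg_real_mul _ hs, Complex.arg_I]
  linarith [Real.pi_pos]

/-! ### Laplace transforms and the series -/

/-- Log-convexity of `Γ` gives `Γ(nν+1) ≤ (n!)^ν`, hence the general term is at most
`x^n / (n!)^(1-ν)`, and the ratio test applies. -/
lemma summable_gamma {ν : ℝ} (h0 : 0 < ν) (h1 : ν < 1) (x : ℝ) (hx : 0 < x):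
    Summable fun n : ℕ => Real.Gamma (n * ν + 1) / n.factorial * x ^ n := by
  have hb : Summable fun n : ℕ => (n.factorial : ℝ) ^ (ν - 1) * x ^ n := by
    have hf : ∀ n : ℕ, 0 < (n.factorial : ℝ) ^ (ν - 1) * x ^ n := fun n => by positivity
    refine summable_of_ratio_test_tendsto_lt_one (l := 0) one_pos
      (.of_forall fun n => (hf n).ne') ?_
    have : Tendsto (fun n : ℕ => ((n + 1 : ℕ) : ℝ) ^ (-(1 - ν)) * x) atTop (𝓝 (0 * x)) :=
      (((tendsto_rpow_neg_atTop (by linarith)).comp tendsto_natCast_atTop_atTop).comp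
        (tendsto_add_atTop_nat 1)).mul_const x
    rw [zero_mul] at this
    refine this.congr fun n => ?_
    rw [Real.norm_of_nonneg (hf _).le, Real.norm_of_nonneg (hf _).le, eq_div_iff (hf n).ne',
      Nat.factorial_succ, Nat.cast_mul, Real.mul_rpow (by positivity) (by positivity), neg_sub]
    ring
  refine Summable.of_nonneg_of_le (fun n => ?_) (fun n => ?_) hb
  · have := Real.Gamma_pos_of_pos (s := n * ν + 1) (by positivity)
    positivity
  · have h := Real.Gamma_mul_add_mul_le_rpow_Gamma_mul_rpow_Gamma (s := (n + 1 : ℝ)) (t := 1)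
      (a := ν) (b := 1 - ν) (by positivity) one_pos h0 (by linarith) (by ring)
    rw [Real.Gamma_one, Real.one_rpow, mul_one (Real.Gamma _ ^ _), Real.Gamma_nat_eq_factorial,
      show ν * (n + 1 : ℝ) + (1 - ν) * 1 = n * ν + 1 by ring] at h
    have hn : (0 : ℝ) < n.factorial := by positivity
    rw [Real.rpow_sub_one hn.ne']
    gcongr

lemma one_div_mem_slitPlane {w : ℂ} (hw : 0 < w.re) : 1 / w ∈ Complex.slitPlane := by
  left
  have : w ≠ 0 := by rintro rfl; simp at hw
  rw [one_div, Complex.inv_re]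
  exact div_pos hw (Complex.normSq_pos.2 this)

lemma integrableOn_rpow_mul_exp {s b : ℝ} (hs : -1 < s) (hb : 0 < b) :
    IntegrableOn (fun t : ℝ => t ^ s * Real.exp (-(b * t))) (Set.Ioi 0) := by
  simpa using integrableOn_rpow_mul_exp_neg_mul_rpow hs one_pos hb

lemma norm_exp_neg_mul_ofReal (w : ℂ) (t : ℝ) :
    ‖Complex.exp (-(w * t))‖ = Real.exp (-(w.re * t)) := by
  rw [Complex.norm_exp]; simp

lemma aesm_aux (a : ℝ) (w : ℂ) : AEStronglyMeasurable
    (fun t : ℝ => ((t ^ a : ℝ) : ℂ) * Complex.exp (-(w * t))) (volume.restrict (Set.Ioi 0)) := by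
  refine Measurable.aestronglyMeasurable ?_
  fun_prop

lemma integrableOn_laplace {a : ℝ} (ha : -1 < a) {w : ℂ} (hw : 0 < w.re) : IntegrableOn
    (fun t : ℝ => ((t ^ a : ℝ) : ℂ) * Complex.exp (-(w * t))) (Set.Ioi 0) := by
  refine (integrableOn_rpow_mul_exp ha hw).mono' (aesm_aux a w) ?_
  filter_upwards [ae_restrict_mem measurableSet_Ioi] with t ht
  rw [norm_mul, norm_exp_neg_mul_ofReal, Complex.norm_real,
    Real.norm_of_nonneg (Real.rpow_nonneg (le_of_lt ht) _)]

lemma differentiableAt_laplace {a : ℝ} (ha : -1 < a) {w : ℂ} (hw : 0 < w.re) :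
    DifferentiableAt ℂ (fun w : ℂ => ∫ t : ℝ in Set.Ioi 0,
      ((t ^ a : ℝ) : ℂ) * Complex.exp (-(w * t))) w := by
  have hre : ∀ z ∈ Metric.ball w (w.re / 2), w.re / 2 ≤ z.re := by
    intro z hz
    have h := (Complex.abs_re_le_norm (z - w)).trans_lt (by simpa [dist_eq_norm] using hz)
    rw [Complex.sub_re, abs_lt] at h
    linarith [h.1]
  refine (hasDerivAt_integral_of_dominated_loc_of_deriv_le
    (F' := fun z t => ((t ^ a : ℝ) : ℂ) * (Complex.exp (-(z * t)) * (-t)))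
    (bound := fun t => t ^ (a + 1) * Real.exp (-(w.re / 2 * t)))
    (Metric.ball_mem_nhds w (half_pos hw)) (.of_forall fun z => aesm_aux a z)
    (integrableOn_laplace ha hw) ?_ ?_ (integrableOn_rpow_mul_exp (by linarith) (half_pos hw))
    ?_).2.differentiableAt
  · refine Measurable.aestronglyMeasurable ?_
    fun_prop
  · filter_upwards [ae_restrict_mem measurableSet_Ioi] with t ht z hz
    have ht : 0 < t := ht
    rw [norm_mul, norm_mul, norm_exp_neg_mul_ofReal, norm_neg, Complex.norm_real, Complex.norm_real,
      Real.norm_of_nonneg (Real.rpow_nonneg ht.le _), Real.norm_of_nonneg ht.le,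
      Real.rpow_add_one ht.ne', mul_assoc, mul_comm (Real.exp _)]
    have := hre z hz
    gcongr
  · filter_upwards with t z _
    have h1 : HasDerivAt (fun z : ℂ => -(z * t)) (-t) z := by
      simpa using! ((hasDerivAt_id z).mul_const (t : ℂ)).neg
    exact h1.cexp.const_mul _

/-- The Laplace transform of a power at a complex point of the right half-plane, obtained from the
real case by the identity theorem. -/
lemma laplace_rpow {a : ℝ} (ha : -1 < a) {w : ℂ} (hw : 0 < w.re) :
    ∫ t : ℝ in Set.Ioi 0, ((t ^ a : ℝ) : ℂ) * Complex.exp (-(w * t)) =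
      (1 / w) ^ ((a + 1 : ℝ) : ℂ) * Real.Gamma (a + 1) := by
  have hopen : IsOpen {w : ℂ | 0 < w.re} := isOpen_lt continuous_const Complex.continuous_re
  have hpre : IsPreconnected {w : ℂ | 0 < w.re} := (convex_halfSpace_re_gt 0).isPreconnected
  have hf : AnalyticOnNhd ℂ (fun w : ℂ => ∫ t : ℝ in Set.Ioi 0,
      ((t ^ a : ℝ) : ℂ) * Complex.exp (-(w * t))) {w : ℂ | 0 < w.re} :=
    DifferentiableOn.analyticOnNhd (fun z hz =>
      (differentiableAt_laplace ha hz).differentiableWithinAt) hopen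
  have hg : AnalyticOnNhd ℂ (fun w : ℂ => (1 / w) ^ ((a + 1 : ℝ) : ℂ) * (Real.Gamma (a + 1) : ℂ))
      {w : ℂ | 0 < w.re} := by
    refine DifferentiableOn.analyticOnNhd (fun z hz => ?_) hopen
    have hz0 : z ≠ 0 := by rintro rfl; simp at hz
    refine (DifferentiableAt.mul_const (DifferentiableAt.cpow ?_ (by fun_prop)
      (one_div_mem_slitPlane hz)) _).differentiableWithinAt
    exact (differentiableAt_const _).div differentiableAt_id hz0
  have hreal : ∀ r : ℝ, 0 < r → (∫ t : ℝ in Set.Ioi 0,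
      ((t ^ a : ℝ) : ℂ) * Complex.exp (-((r : ℂ) * t))) =
      (1 / (r : ℂ)) ^ ((a + 1 : ℝ) : ℂ) * Real.Gamma (a + 1) := by
    intro r hr
    have h := Real.integral_rpow_mul_exp_neg_mul_Ioi (a := a + 1) (by linarith) hr
    rw [add_sub_cancel_right] at h
    have h' := congrArg (fun x : ℝ => (x : ℂ)) h
    simp only [← integral_complex_ofReal] at h'
    push_cast at h'
    rw [Complex.ofReal_cpow (by positivity)] at h'
    push_cast
    push_cast at h'
    exact h'
  refine hf.eqOn_of_preconnected_of_frequently_eq hg hpre (z₀ := 1) (by simp) ?_ hw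
  have ht : Tendsto (fun n : ℕ => ((1 + 1 / ((n : ℝ) + 1) : ℝ) : ℂ)) atTop (𝓝[≠] 1) := by
    refine tendsto_nhdsWithin_iff.2 ⟨?_, .of_forall fun n => ?_⟩
    · have := (tendsto_one_div_add_atTop_nhds_zero_nat (𝕜 := ℝ)).const_add 1
      rw [add_zero] at this
      exact_mod_cast (Complex.continuous_ofReal.tendsto 1).comp this
    · have : (1 + 1 / ((n : ℝ) + 1)) ≠ 1 := by
        have : 0 < 1 / ((n : ℝ) + 1) := by positivity
        linarith
      simpa using! (by exact_mod_cast this : ((1 + 1 / ((n : ℝ) + 1) : ℝ) : ℂ) ≠ 1)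
  exact ht.frequently (.of_forall fun n => hreal _ (by positivity))

/-- For `Re w > 0`, the integral over `t > 0` of `e^(-wt)` times the `n`-th term of the exponential
series of `e^(-c t^ν)`. It is written with `(1/w)^(nν+1)` instead of `w^(-(nν+1))`; the two agree for
`w` off the closed negative real axis. -/
noncomputable def serTerm (ν : ℝ) (c w : ℂ) (n : ℕ) : ℂ :=
  (-c) ^ n / n.factorial * ((1 / w) ^ ((n * ν + 1 : ℝ) : ℂ) * Real.Gamma (n * ν + 1))

/-- Termwise integration of the exponential series of `e^(-c t^ν)` against `e^(-wt)`, `Re w > 0`. -/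
lemma laplace_hasSum {ν : ℝ} (h0 : 0 < ν) (h1 : ν < 1) {c : ℂ} (hc : ‖c‖ = 1) {w : ℂ}
    (hw : 0 < w.re) : HasSum (serTerm ν c w) (∫ t : ℝ in Set.Ioi 0,
      Complex.exp (-(w * t)) * Complex.exp (-(c * (t ^ ν : ℝ)))) := by
  have hn : ∀ n : ℕ, (-1 : ℝ) < n * ν := fun n => by
    have : (0 : ℝ) ≤ n * ν := by positivity
    linarith
  have key := hasSum_integral_of_summable_integral_norm (μ := volume.restrict (Set.Ioi 0))
    (F := fun (n : ℕ) (t : ℝ) => (-c) ^ n / n.factorial *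
      (((t ^ (n * ν) : ℝ) : ℂ) * Complex.exp (-(w * t))))
    (fun n => (integrableOn_laplace (hn n) hw).const_mul _) (by
      refine ((summable_gamma h0 h1 ((1 / w.re) ^ ν) (by positivity)).mul_right
        (1 / w.re)).congr fun n => ?_
      have hfac : (0 : ℝ) < n.factorial := by positivity
      have : ∫ t : ℝ in Set.Ioi 0, ‖(-c) ^ n / n.factorial *
          (((t ^ (n * ν) : ℝ) : ℂ) * Complex.exp (-(w * t)))‖ =
          ∫ t : ℝ in Set.Ioi 0, 1 / n.factorial *
            (t ^ ((n * ν + 1 : ℝ) - 1) * Real.exp (-(w.re * t))) := by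
        refine setIntegral_congr_fun measurableSet_Ioi fun t ht => ?_
        rw [norm_mul, norm_mul, norm_div, norm_pow, norm_neg, hc, one_pow, norm_exp_neg_mul_ofReal,
          Complex.norm_real, Real.norm_of_nonneg (Real.rpow_nonneg (le_of_lt ht) _),
          Complex.norm_natCast, add_sub_cancel_right]
      rw [this, integral_const_mul, Real.integral_rpow_mul_exp_neg_mul_Ioi (by linarith [hn n]) hw,
        Real.rpow_add_one (by positivity), mul_comm (n : ℝ) ν, Real.rpow_mul (by positivity),
        Real.rpow_natCast]
      ring)
  have e1 : ∀ n : ℕ, (∫ t : ℝ in Set.Ioi 0, (-c) ^ n / n.factorial *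
      (((t ^ (n * ν) : ℝ) : ℂ) * Complex.exp (-(w * t)))) = serTerm ν c w n := fun n => by
    rw [integral_const_mul, laplace_rpow (hn n) hw, serTerm]
  have e2 : (∫ t : ℝ in Set.Ioi 0, ∑' n : ℕ, (-c) ^ n / n.factorial *
      (((t ^ (n * ν) : ℝ) : ℂ) * Complex.exp (-(w * t)))) = ∫ t : ℝ in Set.Ioi 0,
      Complex.exp (-(w * t)) * Complex.exp (-(c * (t ^ ν : ℝ))) := by
    refine setIntegral_congr_fun measurableSet_Ioi fun t ht => ?_
    have ht : 0 < t := ht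
    have := (NormedSpace.expSeries_div_hasSum_exp (-(c * (t ^ ν : ℝ)) : ℂ)).mul_left
      (Complex.exp (-(w * t)))
    rw [← Complex.exp_eq_exp_ℂ] at this
    rw [← this.tsum_eq]
    refine tsum_congr fun n => ?_
    rw [mul_comm (n : ℝ) ν, Real.rpow_mul ht.le, Real.rpow_natCast]
    push_cast
    rw [← neg_mul c, mul_pow]
    ring
  rw [e2] at key
  simpa only [e1] using key

lemma norm_serTerm (ν : ℝ) {c : ℂ} (hc : ‖c‖ = 1) (w : ℂ) (n : ℕ) (h0 : 0 < ν) :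
    ‖serTerm ν c w n‖ = Real.Gamma (n * ν + 1) / n.factorial * ‖1 / w‖ ^ (n * ν + 1) := by
  have : 0 < Real.Gamma (n * ν + 1) := Real.Gamma_pos_of_pos (by positivity)
  rw [serTerm, norm_mul, norm_mul, norm_div, norm_pow, norm_neg, hc, one_pow, Complex.norm_cpow_real,
    Complex.norm_real, Real.norm_of_nonneg this.le, Complex.norm_natCast]
  ring

lemma summable_norm_serTerm {ν : ℝ} (h0 : 0 < ν) (h1 : ν < 1) {c : ℂ} (hc : ‖c‖ = 1) {w : ℂ}
    (hw : w ≠ 0) : Summable fun n => ‖serTerm ν c w n‖ := by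
  have hw' : 0 < ‖1 / w‖ := by rw [norm_pos_iff]; exact one_div_ne_zero hw
  refine ((summable_gamma h0 h1 (‖1 / w‖ ^ ν) (by positivity)).mul_right ‖1 / w‖).congr fun n => ?_
  rw [norm_serTerm ν hc w n h0, Real.rpow_add_one hw'.ne', mul_comm (n : ℝ) ν,
    Real.rpow_mul hw'.le, Real.rpow_natCast]
  ring

/-- Boundary values of `laplace_hasSum` on the imaginary axis: let `w = η - ix` with `η → 0+`. The
series is dominated because `|w| ≥ x`, the integral because `Re c > 0`. -/
lemma boundary_hasSum {ν : ℝ} (h0 : 0 < ν) (h1 : ν < 1) {c : ℂ} (hc : ‖c‖ = 1) (hcre : 0 < c.re)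
    {x : ℝ} (hx : 0 < x) : HasSum (serTerm ν c (-(Complex.I * x))) (∫ t : ℝ in Set.Ioi 0,
      Complex.exp (Complex.I * x * t) * Complex.exp (-(c * (t ^ ν : ℝ)))) := by
  have hw0 : -(Complex.I * x) ≠ 0 := by simpa using hx.ne'
  have hsum := summable_norm_serTerm h0 h1 hc hw0
  have hη : Tendsto (fun η : ℝ => (η : ℂ) - Complex.I * x) (𝓝[>] 0) (𝓝 (-(Complex.I * x))) := by
    have : Continuous (fun η : ℝ => (η : ℂ) - Complex.I * x) := by fun_prop
    simpa using (this.tendsto 0).mono_left nhdsWithin_le_nhds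
  have hslit : 1 / (-(Complex.I * x)) ∈ Complex.slitPlane := by
    right
    rw [one_div, Complex.inv_im]
    simp [hx.ne']
  have hA : Tendsto (fun η : ℝ => ∑' n, serTerm ν c ((η : ℂ) - Complex.I * x) n) (𝓝[>] 0)
      (𝓝 (∑' n, serTerm ν c (-(Complex.I * x)) n)) := by
    refine tendsto_tsum_of_dominated_convergence hsum (fun n => ?_) ?_
    · have h2 : Tendsto (fun η : ℝ => 1 / ((η : ℂ) - Complex.I * x)) (𝓝[>] 0)
          (𝓝 (1 / (-(Complex.I * x)))) := tendsto_const_nhds.div hη hw0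
      exact (((continuousAt_cpow_const hslit).tendsto.comp h2).mul_const _).const_mul _
    · filter_upwards with η n
      rw [norm_serTerm ν hc _ n h0, norm_serTerm ν hc _ n h0]
      have : 0 < Real.Gamma (n * ν + 1) := Real.Gamma_pos_of_pos (by positivity)
      have h3 : ‖-(Complex.I * (x : ℂ))‖ ≤ ‖(η : ℂ) - Complex.I * x‖ := by
        have := Complex.abs_im_le_norm ((η : ℂ) - Complex.I * x)
        simpa using this
      rw [norm_div, norm_div, norm_one]
      have h4 : 0 < ‖-(Complex.I * (x : ℂ))‖ := norm_pos_iff.2 hw0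
      gcongr
  have hB : Tendsto (fun η : ℝ => ∫ t : ℝ in Set.Ioi 0,
      Complex.exp (-(((η : ℂ) - Complex.I * x) * t)) * Complex.exp (-(c * (t ^ ν : ℝ)))) (𝓝[>] 0)
      (𝓝 (∫ t : ℝ in Set.Ioi 0,
        Complex.exp (Complex.I * x * t) * Complex.exp (-(c * (t ^ ν : ℝ))))) := by
    have hbi : IntegrableOn (fun t : ℝ => Real.exp (-(c.re * t ^ ν))) (Set.Ioi 0) := by
      simpa using integrableOn_rpow_mul_exp_neg_mul_rpow (s := 0) (by norm_num) h0 hcre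
    refine tendsto_integral_filter_of_dominated_convergence _ ?_ ?_ hbi ?_
    · refine .of_forall fun η => Measurable.aestronglyMeasurable ?_
      fun_prop
    · filter_upwards [self_mem_nhdsWithin] with η hη
      filter_upwards [ae_restrict_mem measurableSet_Ioi] with t ht
      have ht : 0 < t := ht
      have hη : 0 < η := hη
      rw [norm_mul, norm_exp_neg_mul_ofReal, norm_exp_neg_mul_ofReal]
      refine mul_le_of_le_one_left (Real.exp_nonneg _) (Real.exp_le_one_iff.2 ?_)
      simp
      positivity
    · filter_upwards with t
      have : Continuous fun z : ℂ => Complex.exp (-(z * t)) * Complex.exp (-(c * (t ^ ν : ℝ))) := by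
        fun_prop
      simpa [Function.comp_def] using (this.tendsto _).comp hη
  have hAB := tendsto_nhds_unique hA (hB.congr' (by
    filter_upwards [self_mem_nhdsWithin] with η hη
    exact (laplace_hasSum h0 h1 hc (by simpa using! hη)).tsum_eq.symm))
  rw [← hAB]
  exact hsum.of_norm.hasSum

/-! ### Passage to the limit -/

/-- Limit `N → ∞` of `fourier_pow_nonneg`; the Gaussian factor provides the dominating function. -/
lemma reg_nonneg {ν : ℝ} (h0 : 0 < ν) (h1 : ν < 1) {ε : ℝ} (hε : 0 < ε) (x : ℝ) :
    0 ≤ (∫ s : ℝ, Complex.exp (Complex.I * x * s) * Complex.exp (-ε * s ^ 2) *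
      Complex.exp (-(Complex.I * s) ^ (ν : ℂ))).re := by
  set h : ℕ → ℝ := fun N => (N : ℝ) ^ (-(1 / ν)) with hh
  have hpos : ∀ᶠ N : ℕ in atTop, 0 < h N := by
    filter_upwards [eventually_gt_atTop 0] with N hN
    have : (0 : ℝ) < N := by exact_mod_cast hN
    exact Real.rpow_pos_of_pos this _
  have hlim : Tendsto (fun N : ℕ => ∫ s : ℝ, Complex.exp (Complex.I * x * s) *
      Complex.exp (-ε * s ^ 2) *
      sibuyaGen ν (Complex.exp (-((h N + Complex.I * s) * h N))) ^ N) atTop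
      (𝓝 (∫ s : ℝ, Complex.exp (Complex.I * x * s) * Complex.exp (-ε * s ^ 2) *
        Complex.exp (-(Complex.I * s) ^ (ν : ℂ)))) := by
    refine tendsto_integral_filter_of_dominated_convergence (fun s => Real.exp (-ε * s ^ 2))
      ?_ ?_ (integrable_exp_neg_mul_sq hε) ?_
    · refine .of_forall fun N => Measurable.aestronglyMeasurable ?_
      unfold sibuyaGen
      fun_prop
    · filter_upwards [hpos] with N hN
      filter_upwards with s
      have hz1 : ‖Complex.exp (-((h N + Complex.I * s) * h N))‖ < 1 := by
        rw [Complex.norm_exp, Real.exp_lt_one_iff]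
        simp
        positivity
      rw [norm_mul, norm_mul, norm_pow, Complex.norm_exp, Complex.norm_exp]
      have e1 : (Complex.I * x * s).re = 0 := by simp
      have e2 : (-ε * s ^ 2 : ℂ).re = -ε * s ^ 2 := by norm_cast
      rw [e1, e2, Real.exp_zero, one_mul]
      exact mul_le_of_le_one_right (Real.exp_nonneg _)
        (pow_le_one₀ (norm_nonneg _) (norm_sibuyaGen_le h0 h1 hz1))
    · have : ∀ᵐ s : ℝ, s ≠ 0 := by simp [ae_iff, measure_singleton]
      filter_upwards [this] with s hs
      exact (sibuyaGen_pow_tendsto h0 hs).const_mul _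
  refine ge_of_tendsto ((Complex.continuous_re.tendsto _).comp hlim) ?_
  filter_upwards [hpos] with N hN
  exact fourier_pow_nonneg h0 h1 hε hN N x

/-- The Fourier integral of the stable characteristic function, folded onto the half-line. The
Gaussian factor is removed by letting `ε → 0`, using `|e^(-c s^ν)| = e^(-s^ν cos(πν/2))`, which is
integrable because `cos(πν/2) > 0`. -/
lemma half_line_nonneg {ν : ℝ} (h0 : 0 < ν) (h1 : ν < 1) (x : ℝ) :
    0 ≤ (∫ s : ℝ in Set.Ioi 0, Complex.exp (Complex.I * x * s) *
      Complex.exp (-(Complex.exp (Complex.I * (Real.pi * ν / 2 : ℝ)) * (s ^ ν : ℝ)))).re := by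
  set c : ℂ := Complex.exp (Complex.I * (Real.pi * ν / 2 : ℝ)) with hc
  have hcre : 0 < c.re := by
    rw [hc, mul_comm, Complex.exp_ofReal_mul_I_re]
    apply Real.cos_pos_of_mem_Ioo
    constructor <;> nlinarith [Real.pi_pos]
  have hbi : IntegrableOn (fun t : ℝ => Real.exp (-(c.re * t ^ ν))) (Set.Ioi 0) := by
    simpa using integrableOn_rpow_mul_exp_neg_mul_rpow (s := 0) (by norm_num) h0 hcre
  have hbd : ∀ (ε s : ℝ), 0 ≤ ε → ‖Complex.exp (Complex.I * x * s) * Complex.exp (-ε * s ^ 2) *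
      Complex.exp (-(c * (s ^ ν : ℝ)))‖ ≤ Real.exp (-(c.re * s ^ ν)) := by
    intro ε s hε
    rw [norm_mul, norm_mul, Complex.norm_exp, Complex.norm_exp, norm_exp_neg_mul_ofReal]
    have e1 : (Complex.I * x * s).re = 0 := by simp
    have e2 : (-ε * s ^ 2 : ℂ).re = -ε * s ^ 2 := by norm_cast
    rw [e1, e2, Real.exp_zero, one_mul]
    refine mul_le_of_le_one_left (Real.exp_nonneg _) (Real.exp_le_one_iff.2 ?_)
    nlinarith [sq_nonneg s]
  have hlim : Tendsto (fun ε : ℝ => ∫ s : ℝ in Set.Ioi 0, Complex.exp (Complex.I * x * s) *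
      Complex.exp (-ε * s ^ 2) * Complex.exp (-(c * (s ^ ν : ℝ)))) (𝓝[>] 0)
      (𝓝 (∫ s : ℝ in Set.Ioi 0, Complex.exp (Complex.I * x * s) *
        Complex.exp (-(c * (s ^ ν : ℝ))))) := by
    refine tendsto_integral_filter_of_dominated_convergence _ ?_ ?_ hbi ?_
    · refine .of_forall fun ε => Measurable.aestronglyMeasurable ?_
      fun_prop
    · filter_upwards [self_mem_nhdsWithin] with ε hε
      exact ae_of_all _ fun s => hbd ε s (le_of_lt hε)
    · filter_upwards with s
      have : Continuous fun ε : ℝ => Complex.exp (Complex.I * x * s) *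
          Complex.exp (-ε * s ^ 2) * Complex.exp (-(c * (s ^ ν : ℝ))) := by fun_prop
      simpa using (this.tendsto 0).mono_left nhdsWithin_le_nhds
  refine ge_of_tendsto ((Complex.continuous_re.tendsto _).comp hlim) ?_
  filter_upwards [self_mem_nhdsWithin] with ε hε
  have hε : 0 < ε := hε
  simp only [Function.comp]
  set K : ℝ → ℂ := fun s => Complex.exp (Complex.I * x * s) * Complex.exp (-ε * s ^ 2) *
      Complex.exp (-(Complex.I * s) ^ (ν : ℂ)) with hK
  have hKpos : ∀ s : ℝ, 0 < s → K s = Complex.exp (Complex.I * x * s) *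
      Complex.exp (-ε * s ^ 2) * Complex.exp (-(c * (s ^ ν : ℝ))) := by
    intro s hs
    simp only [hK]
    rw [I_mul_cpow ν hs, mul_comm c]
  have hKneg : ∀ s : ℝ, 0 < s → K (-s) = (starRingEnd ℂ) (K s) := by
    intro s hs
    simp only [hK]
    rw [conj_I_cpow ν s hs]
    simp [← Complex.exp_conj]
  have hKabs : ∀ s : ℝ, (K s).re = (K |s|).re := by
    intro s
    rcases lt_or_ge s 0 with hs | hs
    · have := hKneg _ (neg_pos.2 hs)
      rw [neg_neg] at this
      rw [abs_of_neg hs, this, Complex.conj_re]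
    · rw [abs_of_nonneg hs]
  have hKion : IntegrableOn K (Set.Ioi 0) := by
    have : IntegrableOn (fun s : ℝ => Complex.exp (Complex.I * x * s) *
      Complex.exp (-ε * s ^ 2) * Complex.exp (-(c * (s ^ ν : ℝ)))) (Set.Ioi 0) := by
      refine hbi.mono' (Measurable.aestronglyMeasurable (by fun_prop)) (ae_of_all _ fun s => ?_)
      exact hbd ε s hε.le
    exact this.congr_fun (fun s hs => (hKpos s hs).symm) measurableSet_Ioi
  have hKint : Integrable K := by
    rw [← integrableOn_univ, ← Set.Iic_union_Ioi (a := (0 : ℝ)), integrableOn_union]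
    refine ⟨?_, hKion⟩
    rw [integrableOn_Iic_iff_integrableOn_Iio]
    have h2 : IntegrableOn (fun s => (starRingEnd ℂ) (K s)) (Set.Ioi 0) :=
      Integrable.mono hKion (Complex.continuous_conj.comp_aestronglyMeasurable hKion.1)
        (ae_of_all _ fun s => (RCLike.norm_conj (K s)).le)
    have h3 : IntegrableOn (fun s => K (-s)) (Set.Ioi 0) :=
      h2.congr_fun (fun s hs => (hKneg s hs).symm) measurableSet_Ioi
    simpa using h3.comp_neg
  have hfin : (∫ s, K s).re = 2 * (∫ s in Set.Ioi 0, K s).re := by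
    have e1 := Complex.reCLM.integral_comp_comm hKint
    have e2 := Complex.reCLM.integral_comp_comm hKion
    simp only [Complex.reCLM_apply] at e1 e2
    rw [← e1, ← e2, ← integral_comp_abs (f := fun s => (K s).re)]
    exact integral_congr_ae (ae_of_all _ hKabs)
  have hpos := reg_nonneg h0 h1 hε x
  rw [show (∫ s : ℝ in Set.Ioi 0, Complex.exp (Complex.I * x * s) *
      Complex.exp (-ε * s ^ 2) * Complex.exp (-(c * (s ^ ν : ℝ)))) = ∫ s in Set.Ioi 0, K s from
    setIntegral_congr_fun measurableSet_Ioi fun s hs => (hKpos s hs).symm]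
  change 0 ≤ (∫ s, K s).re at hpos
  linarith

/-! ### Identification of the series -/

/-- For `n ≥ 1` the real part of the `n`-th boundary term is the `n`-th term of the series for
`π ψ_ν`; for `n = 0` the sine factor vanishes. -/
lemma serTerm_re (ν : ℝ) {x : ℝ} (hx : 0 < x) (n : ℕ) :
    (serTerm ν (Complex.exp (Complex.I * (Real.pi * ν / 2 : ℝ))) (-(Complex.I * x)) n).re =
      -((-1) ^ n * x ^ (-(n * ν + 1)) * (Real.Gamma (n * ν + 1) / n.factorial) *
        Real.sin (n * Real.pi * ν)) := by
  have e1 : 1 / (-(Complex.I * x)) = ((x⁻¹ : ℝ) : ℂ) * Complex.I := by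
    have : (x : ℂ) ≠ 0 := by exact_mod_cast hx.ne'
    push_cast
    field_simp
    simp
  have e2 : (-Complex.exp (Complex.I * (Real.pi * ν / 2 : ℝ))) ^ n *
      Complex.exp (Real.log x⁻¹ * (n * ν + 1 : ℝ)) *
      Complex.exp (Real.pi / 2 * Complex.I * (n * ν + 1 : ℝ)) =
      (((-1) ^ n * x ^ (-(n * ν + 1)) : ℝ) : ℂ) *
        (Complex.I * Complex.exp ((n * Real.pi * ν : ℝ) * Complex.I)) := by
    rw [neg_pow, ← Complex.exp_nat_mul, ← Complex.ofReal_mul, ← Complex.ofReal_exp,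
      ← Real.rpow_def_of_pos (by positivity), Real.inv_rpow hx.le, ← Real.rpow_neg hx.le]
    have : Complex.exp (n * (Complex.I * (Real.pi * ν / 2 : ℝ))) *
        Complex.exp (Real.pi / 2 * Complex.I * (n * ν + 1 : ℝ)) =
        Complex.I * Complex.exp ((n * Real.pi * ν : ℝ) * Complex.I) := by
      nth_rewrite 3 [← Complex.exp_pi_div_two_mul_I]
      rw [← Complex.exp_add, ← Complex.exp_add]
      congr 1
      push_cast
      ring
    rw [← this]
    push_cast
    ring
  have e3 : serTerm ν (Complex.exp (Complex.I * (Real.pi * ν / 2 : ℝ))) (-(Complex.I * x)) n =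
      (((-1) ^ n * x ^ (-(n * ν + 1)) * (Real.Gamma (n * ν + 1) / n.factorial) : ℝ) : ℂ) *
        (Complex.I * Complex.exp ((n * Real.pi * ν : ℝ) * Complex.I)) := by
    rw [serTerm, e1, Complex.cpow_def_of_ne_zero (by simpa using hx.ne'),
      Complex.log_ofReal_mul (by positivity) (by simp), Complex.log_I, add_mul, Complex.exp_add]
    rw [Complex.ofReal_mul (_ * _) (_ / _), Complex.ofReal_div (Real.Gamma _), Complex.ofReal_natCast]
    linear_combination ((Real.Gamma (n * ν + 1) : ℂ) / n.factorial) * e2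
  rw [e3, Complex.re_ofReal_mul, Complex.I_mul_re, Complex.exp_ofReal_mul_I_im]
  ring

lemma psiNu_nonneg {ν : ℝ} (h0 : 0 < ν) (h1 : ν < 1) {x : ℝ} (hx : 0 < x) : 0 ≤ psiNu ν x := by
  have hcre : 0 < (Complex.exp (Complex.I * (Real.pi * ν / 2 : ℝ))).re := by
    rw [mul_comm, Complex.exp_ofReal_mul_I_re]
    apply Real.cos_pos_of_mem_Ioo
    constructor <;> nlinarith [Real.pi_pos]
  have hc : ‖Complex.exp (Complex.I * (Real.pi * ν / 2 : ℝ))‖ = 1 := by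
    rw [mul_comm, Complex.norm_exp_ofReal_mul_I]
  have hs := Complex.hasSum_re (boundary_hasSum h0 h1 hc hcre hx)
  simp only [serTerm_re ν hx] at hs
  rw [← hasSum_nat_add_iff' 1] at hs
  have e : ∀ n : ℕ, wrightTerm ν x n = -((-1) ^ (n + 1) * x ^ (-((n + 1 : ℕ) * ν + 1)) *
      (Real.Gamma ((n + 1 : ℕ) * ν + 1) / (n + 1).factorial) *
        Real.sin ((n + 1 : ℕ) * Real.pi * ν)) := by
    intro n
    rw [wrightTerm, show -(ν * (n + 1 : ℝ)) - 1 = -((n + 1 : ℕ) * ν + 1) by push_cast; ring]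
    push_cast
    ring
  simp only [← e] at hs
  rw [psiNu, hs.tsum_eq]
  have := half_line_nonneg h0 h1 x
  simp only [Finset.range_one, Finset.sum_singleton, Nat.cast_zero, zero_mul, Real.sin_zero,
    mul_zero, neg_zero, sub_zero]
  positivity

end

/-- For every `ν ∈ (0,1)`, `ψ_ν(Θ) ≥ 0` for all `Θ > 0`; consequently
`φ_ν(Θ) ≥ 0` for all `Θ > 0`. -/
theorem psiNu_nonneg_and_phiNu_nonneg (ν : ℝ) (hν : ν ∈ Set.Ioo (0 : ℝ) 1) :
    (∀ Θ : ℝ, 0 < Θ → 0 ≤ psiNu ν Θ) ∧ (∀ Θ : ℝ, 0 < Θ → 0 ≤ phiNu ν Θ) := by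
  have hψ : ∀ Θ : ℝ, 0 < Θ → 0 ≤ psiNu ν Θ := fun Θ hΘ => psiNu_nonneg hν.1 hν.2 hΘ
  refine ⟨hψ, fun Θ hΘ => ?_⟩
  have h0 : 0 < ν := hν.1
  have := hψ (Θ ^ (-(1 / ν))) (Real.rpow_pos_of_pos hΘ _)
  rw [phiNu]
  positivity
end

section
/- Assume in addition that T(s) is a compact operator for every s > 0 and that s ↦ T(s) is continuous in the operator norm on (0,∞). Then for every t > 0 the operator S_ν(t) is a compact operator on X. -/
/-! The operator `S_ν(t)` is the Bochner integral, in the Banach space `X →L[ℂ] X`, of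
`Θ ↦ φ_ν(Θ) T(t ^ ν Θ)`. It is strongly measurable because `T` is norm continuous on `(0, ∞)`, its
values there are compact, and the compact operators form a closed subspace, so the integral is compact as soon as
the integrand is integrable (`isCompactOperator_integral`). As `T` is bounded, integrability reduces
to that of `φ_ν` on `(0, ∞)` (`integrableOn_phiNu`).

The integrability of `φ_ν` has to be extracted from its power series. For `|β| < π/2`, replace
`Γ((n+1)ν+1)` by an Euler integral along the ray `arg = β` (`integral_rpow_mul_cexp`). Summing the
exponential series gives (`phiNu_eq`)
`φ_ν(Θ) = -(1/(νπΘ)) Im (e^{iβ} ∫₀^∞ (exp (-Θ s^ν e^{iν(π+β)}) - 1) exp (-e^{iβ} s) ds)`.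
On the real ray `β = 0` the inner exponential grows when `ν > 1/2`; rotating to
`β = -πν/(1+ν)` puts both `e^{iβ}` and `e^{iν(π+β)}` in the open right half-plane for every
`ν ∈ (0,1)`. The formula then shows that `φ_ν` is bounded and is `O(Θ^{-1-1/ν})`
(`exists_phiNu_bound`). -/

open MeasureTheory

/-! ### Integral representation of `φ_ν` -/

/-- The Euler integral with a complex rate. Both sides are holomorphic in `r` on the right half-plane
(the left one as the complex moment generating function, at `-r`, of `t ^ (a - 1) dt` on `(0, ∞)`)
and they agree for real `r > 0`, so the identity theorem applies. -/
lemma integral_rpow_mul_cexp {a : ℝ} (ha : 0 < a) {r : ℂ} (hr : 0 < r.re) :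
    ∫ t in Set.Ioi (0 : ℝ), ((t ^ (a - 1) : ℝ) : ℂ) * Complex.exp (-(r * t)) =
      r ^ (-a : ℂ) * (Real.Gamma a : ℂ) := by
  set μ : Measure ℝ :=
    (volume.restrict (Set.Ioi 0)).withDensity (fun t => ENNReal.ofReal (t ^ (a - 1))) with hμ
  have hmeas : Measurable (fun t : ℝ => ENNReal.ofReal (t ^ (a - 1))) := by fun_prop
  have hfin : ∀ᵐ t ∂(volume.restrict (Set.Ioi (0 : ℝ))),
      ENNReal.ofReal (t ^ (a - 1)) < ⊤ := by simp
  have hsub : {z : ℂ | z.re < 0} ⊆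
      {z : ℂ | z.re ∈ interior (ProbabilityTheory.integrableExpSet id μ)} := by
    intro z hz
    refine interior_maximal (s := ProbabilityTheory.integrableExpSet id μ) (t := Set.Iio 0)
      ?_ isOpen_Iio hz
    intro x hx
    have hx' : 0 < -x := by simpa using hx
    have h1 := integrableOn_rpow_mul_exp_neg_mul_rpow (p := 1) (s := a - 1) (b := -x)
      (by linarith) one_pos hx'
    change Integrable _ μ
    rw [hμ, integrable_withDensity_iff_integrable_smul' hmeas hfin]
    refine h1.congr_fun (fun t ht => ?_) measurableSet_Ioi
    simp [ENNReal.toReal_ofReal (Real.rpow_nonneg (le_of_lt ht) (a - 1))]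
  have hval : ∀ z : ℂ, ProbabilityTheory.complexMGF id μ z =
      ∫ t in Set.Ioi (0 : ℝ), ((t ^ (a - 1) : ℝ) : ℂ) * Complex.exp (z * t) := by
    intro z
    rw [ProbabilityTheory.complexMGF, hμ,
      integral_withDensity_eq_integral_toReal_smul hmeas hfin]
    refine setIntegral_congr_fun measurableSet_Ioi (fun t ht => ?_)
    simp [ENNReal.toReal_ofReal (Real.rpow_nonneg (le_of_lt ht) (a - 1))]
  have hf : AnalyticOnNhd ℂ (ProbabilityTheory.complexMGF id μ) {z : ℂ | z.re < 0} :=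
    ProbabilityTheory.analyticOnNhd_complexMGF.mono hsub
  have hopen : IsOpen {z : ℂ | z.re < 0} := isOpen_Iio.preimage Complex.continuous_re
  have hg : AnalyticOnNhd ℂ (fun z : ℂ => (-z) ^ (-a : ℂ) * (Real.Gamma a : ℂ))
      {z : ℂ | z.re < 0} := by
    refine DifferentiableOn.analyticOnNhd (fun z hz => ?_) hopen
    refine DifferentiableAt.differentiableWithinAt ?_
    refine (DifferentiableAt.cpow_const (by fun_prop) ?_).mul_const _
    left
    simpa using hz
  have hconn : IsPreconnected {z : ℂ | z.re < 0} := (convex_halfSpace_re_lt 0).isPreconnected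
  have hreal : ∀ x : ℝ, x < 0 → ProbabilityTheory.complexMGF id μ (x : ℂ) =
      (-(x : ℂ)) ^ (-a : ℂ) * (Real.Gamma a : ℂ) := by
    intro x hx
    have h := Real.integral_rpow_mul_exp_neg_mul_Ioi ha (neg_pos.2 hx)
    rw [hval]
    have h2 : (-(x : ℂ)) ^ (-a : ℂ) * (Real.Gamma a : ℂ) =
        (((1 / -x) ^ a * Real.Gamma a : ℝ) : ℂ) := by
      rw [one_div, Real.inv_rpow (by linarith), ← Real.rpow_neg (by linarith)]
      push_cast [Complex.ofReal_cpow (show 0 ≤ -x by linarith)]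
      rfl
    rw [h2, ← h, ← integral_complex_ofReal]
    refine setIntegral_congr_fun measurableSet_Ioi (fun t _ => ?_)
    simp
  have hfreq : ∃ᶠ z in nhdsWithin (-1 : ℂ) {-1}ᶜ, ProbabilityTheory.complexMGF id μ z =
      (-z) ^ (-a : ℂ) * (Real.Gamma a : ℂ) := by
    have ht : Filter.Tendsto (fun x : ℝ => (x : ℂ)) (nhdsWithin (-1) {-1}ᶜ)
        (nhdsWithin (-1 : ℂ) {-1}ᶜ) := by
      refine tendsto_nhdsWithin_iff.2 ⟨?_, ?_⟩
      · have := (Complex.continuous_ofReal.tendsto (-1)).mono_left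
          (nhdsWithin_le_nhds (s := {-1}ᶜ))
        simpa using this
      · filter_upwards [self_mem_nhdsWithin] with x hx
        simp only [Set.mem_compl_iff, Set.mem_singleton_iff] at hx ⊢
        exact_mod_cast hx
    refine ht.frequently (Filter.Eventually.frequently ?_)
    filter_upwards [mem_nhdsWithin_of_mem_nhds (Iio_mem_nhds (show (-1 : ℝ) < 0 by norm_num))]
      with x hx using hreal x hx
  have hEq := hf.eqOn_of_preconnected_of_frequently_eq hg hconn (z₀ := -1)
    (by simp) hfreq
  have := hEq (show (-r).re < 0 by simpa using hr)
  rw [hval] at this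
  simpa using this

lemma norm_cexp_sub_one_le {z : ℂ} (hz : z.re ≤ 0) : ‖Complex.exp z - 1‖ ≤ ‖z‖ := by
  have h := (convex_halfSpace_re_le 0).norm_image_sub_le_of_norm_hasDerivWithin_le
    (f := Complex.exp) (f' := Complex.exp) (C := 1) (x := 0) (y := z)
    (fun w _ => (Complex.hasDerivAt_exp w).hasDerivWithinAt)
    (fun w hw => by
      rw [Complex.norm_exp]
      exact Real.exp_le_one_iff.2 hw) (by simp) hz
  simpa using h

lemma integrableOn_exp_rpow_sub {ν : ℝ} (h0 : 0 < ν) (h1 : ν < 1) (A : ℝ) {c : ℝ} (hc : 0 < c) :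
    IntegrableOn (fun s : ℝ => Real.exp (A * s ^ ν) * Real.exp (-(c * s))) (Set.Ioi 0) := by
  refine integrable_of_isBigO_exp_neg (b := c / 2) (by linarith) ?_ ?_
  · refine Continuous.continuousOn ?_
    have := Real.continuous_rpow_const h0.le
    fun_prop
  · have hlim : Filter.Tendsto (fun s : ℝ => A * s ^ (ν - 1)) Filter.atTop (nhds 0) := by
      have := (tendsto_rpow_neg_atTop (show 0 < 1 - ν by linarith)).const_mul A
      simpa using this
    refine Asymptotics.IsBigO.of_bound 1 ?_
    filter_upwards [hlim.eventually (Iio_mem_nhds (show 0 < c / 2 by linarith)),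
      Filter.eventually_gt_atTop 0] with s hs hs0
    have hs' : A * s ^ (ν - 1) < c / 2 := hs
    rw [← Real.exp_add, Real.norm_eq_abs, Real.norm_eq_abs, Real.abs_exp, Real.abs_exp, one_mul,
      Real.exp_le_exp]
    have : s ^ ν = s ^ (ν - 1) * s := by
      rw [← Real.rpow_add_one hs0.ne']; simp
    rw [this]
    nlinarith

open Complex in
/-- Integral representation of the series defining `ψ_ν`, on an arbitrary ray `arg = β` with
`|β| < π/2`. Each `Γ((n+1)ν+1)` is written as an integral over that ray and the summation is
exchanged with the integral, which is legitimate since `ν < 1` makes `exp (Θ s ^ ν - s cos β)`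
integrable. -/
lemma hasSum_wrightTerm {ν : ℝ} (h0 : 0 < ν) (h1 : ν < 1) {Θ : ℝ} (hΘ : 0 < Θ) {β : ℝ}
    (hβ : β ∈ Set.Ioo (-(Real.pi / 2)) (Real.pi / 2)) :
    HasSum (fun n => wrightTerm ν (Θ ^ (-(1 / ν))) n)
      (-(Θ ^ (1 / ν)) * (exp (β * I) * ∫ s in Set.Ioi (0 : ℝ),
        (exp (-(Θ * (s ^ ν : ℝ)) * exp ((ν * (Real.pi + β) : ℝ) * I)) - 1) *
          exp (-(exp (β * I) * s))).im) := by
  set r : ℂ := exp (β * I) with hr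
  set w : ℂ := exp ((ν * (Real.pi + β) : ℝ) * I) with hw
  have hrre : r.re = Real.cos β := by rw [hr, exp_ofReal_mul_I_re]
  have hc : 0 < Real.cos β := Real.cos_pos_of_mem_Ioo hβ
  have hwn : ‖w‖ = 1 := norm_exp_ofReal_mul_I _
  have hexp : ∀ s : ℝ, ‖exp (-(r * s))‖ = Real.exp (-(Real.cos β * s)) := by
    intro s
    rw [norm_exp]
    simp [hrre]
  have hcont : Continuous fun s : ℝ => s ^ ν := Real.continuous_rpow_const h0.le
  have hbsum : ∀ s : ℝ, HasSum
      (fun n : ℕ => (Θ * s ^ ν) ^ (n + 1) / (n + 1).factorial * Real.exp (-(Real.cos β * s)))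
      ((Real.exp (Θ * s ^ ν) - 1) * Real.exp (-(Real.cos β * s))) := by
    intro s
    refine HasSum.mul_right _ ?_
    have h := NormedSpace.expSeries_div_hasSum_exp (Θ * s ^ ν)
    rw [← Real.exp_eq_exp_ℝ] at h
    simpa using (hasSum_nat_add_iff' 1).2 h
  have hsum := hasSum_integral_of_dominated_convergence
    (μ := volume.restrict (Set.Ioi (0 : ℝ)))
    (F := fun (n : ℕ) (s : ℝ) =>
      (-(Θ * (s ^ ν : ℝ)) * w) ^ (n + 1) / (n + 1).factorial * exp (-(r * s)))
    (f := fun s : ℝ => (exp (-(Θ * (s ^ ν : ℝ)) * w) - 1) * exp (-(r * s)))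
    (fun (n : ℕ) (s : ℝ) =>
      (Θ * s ^ ν) ^ (n + 1) / (n + 1).factorial * Real.exp (-(Real.cos β * s)))
    (fun n => Continuous.aestronglyMeasurable (by fun_prop))
    (fun n => by
      filter_upwards [ae_restrict_mem measurableSet_Ioi] with s hs
      have : 0 ≤ s ^ ν := Real.rpow_nonneg (le_of_lt hs) ν
      rw [norm_mul, hexp, norm_div, norm_pow, norm_mul, hwn, norm_neg, norm_mul,
        norm_real, norm_real, Real.norm_of_nonneg hΘ.le, Real.norm_of_nonneg this]
      simp)
    (Filter.Eventually.of_forall fun s => (hbsum s).summable)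
    (by
      simp_rw [fun s => (hbsum s).tsum_eq, sub_mul, one_mul]
      refine (integrableOn_exp_rpow_sub h0 h1 Θ hc).sub ?_
      simpa using integrableOn_exp_rpow_sub h0 h1 0 hc)
    (Filter.Eventually.of_forall fun s => by
      refine HasSum.mul_right _ ?_
      have h := NormedSpace.expSeries_div_hasSum_exp (-(Θ * (s ^ ν : ℝ)) * w)
      rw [← Complex.exp_eq_exp_ℂ] at h
      simpa using (hasSum_nat_add_iff' 1).2 h)
  refine (((hasSum_im (hsum.mul_left r))).mul_left (-(Θ ^ (1 / ν)))).congr_fun ?_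
  intro n
  have hn : (0 : ℝ) < ((n : ℝ) + 1) * ν + 1 := by positivity
  have hint : ∫ s in Set.Ioi (0 : ℝ),
      (-(Θ * (s ^ ν : ℝ)) * w) ^ (n + 1) / (n + 1).factorial * exp (-(r * s)) =
      (-Θ * w) ^ (n + 1) / (n + 1).factorial *
        (r ^ (-(((n : ℝ) + 1) * ν + 1 : ℝ) : ℂ) * (Real.Gamma (((n : ℝ) + 1) * ν + 1) : ℂ)) := by
    rw [← integral_rpow_mul_cexp hn (by rwa [hrre]), ← integral_const_mul]
    refine setIntegral_congr_fun measurableSet_Ioi (fun s hs => ?_)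
    have h2 : s ^ (((n : ℝ) + 1) * ν + 1 - 1) = (s ^ ν) ^ (n + 1) := by
      rw [← Real.rpow_natCast, ← Real.rpow_mul (le_of_lt hs)]
      congr 1
      push_cast
      ring
    simp only [h2]
    push_cast
    ring
  have hcpow : r ^ (-(((n : ℝ) + 1) * ν + 1 : ℝ) : ℂ) =
      exp ((-(β * (((n : ℝ) + 1) * ν + 1)) : ℝ) * I) := by
    rw [hr, cpow_def_of_ne_zero (exp_ne_zero _), log_exp]
    · congr 1; push_cast; ring
    · simp; linarith [hβ.1, Real.pi_pos]
    · simp; linarith [hβ.2, Real.pi_pos]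
  -- the rotation by `β` cancels and only the phase `(n + 1) π ν` is left
  have hphase : r * (w ^ (n + 1) * exp ((-(β * (((n : ℝ) + 1) * ν + 1)) : ℝ) * I)) =
      exp ((((n : ℝ) + 1) * Real.pi * ν : ℝ) * I) := by
    rw [hr, hw, ← exp_nat_mul, ← exp_add, ← exp_add]
    congr 1
    push_cast
    ring
  have htot : r * ∫ s in Set.Ioi (0 : ℝ),
      (-(Θ * (s ^ ν : ℝ)) * w) ^ (n + 1) / (n + 1).factorial * exp (-(r * s)) =
      (((-Θ) ^ (n + 1) / (n + 1).factorial * Real.Gamma (((n : ℝ) + 1) * ν + 1) : ℝ) : ℂ) *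
        exp ((((n : ℝ) + 1) * Real.pi * ν : ℝ) * I) := by
    rw [hint, hcpow, ← hphase, mul_pow]
    push_cast
    ring
  simp only [htot]
  have hpow : (Θ ^ (-(1 / ν))) ^ (-(ν * ((n : ℝ) + 1)) - 1) = Θ ^ (1 / ν) * Θ ^ (n + 1) := by
    rw [← Real.rpow_natCast, ← Real.rpow_add hΘ, ← Real.rpow_mul hΘ.le]
    congr 1
    push_cast
    field_simp
    ring
  rw [im_ofReal_mul, exp_ofReal_mul_I_im, wrightTerm, hpow, neg_pow Θ, pow_succ (-1 : ℝ) n]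
  ring

lemma phiNu_eq {ν : ℝ} (h0 : 0 < ν) (h1 : ν < 1) {Θ : ℝ} (hΘ : 0 < Θ) {β : ℝ}
    (hβ : β ∈ Set.Ioo (-(Real.pi / 2)) (Real.pi / 2)) :
    phiNu ν Θ = -(1 / (ν * Real.pi)) * Θ⁻¹ *
      (Complex.exp (β * Complex.I) * ∫ s in Set.Ioi (0 : ℝ),
        (Complex.exp (-(Θ * (s ^ ν : ℝ)) *
            Complex.exp ((ν * (Real.pi + β) : ℝ) * Complex.I)) - 1) *
          Complex.exp (-(Complex.exp (β * Complex.I) * s))).im := by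
  have hpow : Θ ^ (-1 - 1 / ν) * Θ ^ (1 / ν) = Θ⁻¹ := by
    rw [← Real.rpow_add hΘ, ← Real.rpow_neg_one]
    congr 1
    ring
  rw [phiNu, psiNu, (hasSum_wrightTerm h0 h1 hΘ hβ).tsum_eq, ← hpow]
  ring

/-! ### Bounds and integrability of `φ_ν` -/

/-- The bound by `C₁` uses `‖exp z - 1‖ ≤ ‖z‖` for `Re z ≤ 0` under the integral sign. The decay bound
uses that the subtracted term `-1` contributes a real number, hence nothing to the imaginary part;
what remains is dominated by `∫ exp (-Θ c s ^ ν) ds`, a multiple of `Θ ^ (-1/ν)`. -/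
lemma exists_phiNu_bound {ν : ℝ} (h0 : 0 < ν) (h1 : ν < 1) :
    ∃ C₁ C₂ : ℝ, ∀ Θ : ℝ, 0 < Θ →
      |phiNu ν Θ| ≤ C₁ ∧ |phiNu ν Θ| ≤ C₂ * Θ ^ (-1 - 1 / ν) := by
  have hπ := Real.pi_pos
  -- with this angle, `exp (β * I)` and `exp (ν * (π + β) * I)` are conjugate to each other
  set β : ℝ := -(Real.pi * ν / (1 + ν)) with hβdef
  have hconj : ν * (Real.pi + β) = -β := by
    rw [hβdef]
    field_simp
    ring
  have hlt : Real.pi * ν / (1 + ν) < Real.pi / 2 := by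
    rw [div_lt_div_iff₀ (by linarith) two_pos]
    nlinarith
  have hpos : 0 < Real.pi * ν / (1 + ν) := by positivity
  have hβ : β ∈ Set.Ioo (-(Real.pi / 2)) (Real.pi / 2) := ⟨by linarith, by linarith⟩
  set c : ℝ := Real.cos β with hcdef
  have hc : 0 < c := Real.cos_pos_of_mem_Ioo hβ
  set r : ℂ := Complex.exp (β * Complex.I) with hr
  set w : ℂ := Complex.exp ((ν * (Real.pi + β) : ℝ) * Complex.I) with hw
  have hrre : r.re = c := by rw [hr, Complex.exp_ofReal_mul_I_re]
  have hwre : w.re = c := by rw [hw, Complex.exp_ofReal_mul_I_re, hconj, Real.cos_neg]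
  have hrn : ‖r‖ = 1 := Complex.norm_exp_ofReal_mul_I _
  have hwn : ‖w‖ = 1 := Complex.norm_exp_ofReal_mul_I _
  have hcont : Continuous fun s : ℝ => s ^ ν := Real.continuous_rpow_const h0.le
  have hexp : ∀ s : ℝ, ‖Complex.exp (-(r * s))‖ = Real.exp (-(c * s)) := by
    intro s
    rw [Complex.norm_exp]
    simp [hrre]
  have hzre : ∀ Θ s : ℝ, (-((Θ : ℂ) * (s ^ ν : ℝ)) * w).re = -(Θ * c) * s ^ ν := by
    intro Θ s
    rw [← Complex.ofReal_mul, ← Complex.ofReal_neg, Complex.re_ofReal_mul, hwre]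
    ring
  have hint1 : IntegrableOn (fun s : ℝ => s ^ ν * Real.exp (-(c * s))) (Set.Ioi 0) := by
    simpa using integrableOn_rpow_mul_exp_neg_mul_rpow (p := 1) (s := ν) (b := c)
      (by linarith) one_pos hc
  have hint0 : IntegrableOn (fun s : ℝ => Complex.exp (-(r * s))) (Set.Ioi 0) := by
    have h : IntegrableOn (fun s : ℝ => Real.exp (-(c * s))) (Set.Ioi 0) := by
      simpa using integrableOn_exp_rpow_sub h0 h1 0 hc
    refine h.mono' (Continuous.aestronglyMeasurable (by fun_prop)) ?_
    exact Filter.Eventually.of_forall fun s => (hexp s).le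
  have hone : r * ∫ s in Set.Ioi (0 : ℝ), Complex.exp (-(r * s)) = 1 := by
    have h := integral_rpow_mul_cexp one_pos (r := r) (by rwa [hrre])
    simp only [sub_self, Real.rpow_zero, Complex.ofReal_one, one_mul, Real.Gamma_one, mul_one,
      Complex.cpow_neg_one] at h
    rw [h, mul_inv_cancel₀ (Complex.exp_ne_zero _)]
  refine ⟨1 / (ν * Real.pi) * ∫ s in Set.Ioi (0 : ℝ), s ^ ν * Real.exp (-(c * s)),
    1 / (ν * Real.pi) * (c ^ (-1 / ν) * Real.Gamma (1 / ν + 1)), fun Θ hΘ => ?_⟩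
  have hk : 0 ≤ 1 / (ν * Real.pi) * Θ⁻¹ := by positivity
  rw [phiNu_eq h0 h1 hΘ hβ, abs_mul, abs_mul, abs_neg, ← abs_mul, abs_of_nonneg hk]
  constructor
  · have hb : ‖∫ s in Set.Ioi (0 : ℝ), (Complex.exp (-(Θ * (s ^ ν : ℝ)) * w) - 1) *
        Complex.exp (-(r * s))‖ ≤
        ∫ s in Set.Ioi (0 : ℝ), Θ * (s ^ ν * Real.exp (-(c * s))) := by
      refine norm_integral_le_of_norm_le (hint1.const_mul Θ) ?_
      filter_upwards [ae_restrict_mem measurableSet_Ioi] with s hs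
      have hs' : 0 ≤ s ^ ν := Real.rpow_nonneg (le_of_lt hs) ν
      rw [norm_mul, hexp, ← mul_assoc]
      refine mul_le_mul_of_nonneg_right ?_ (Real.exp_pos _).le
      refine (norm_cexp_sub_one_le ?_).trans ?_
      · rw [hzre]
        have : 0 ≤ Θ * c * s ^ ν := by positivity
        linarith
      · rw [norm_mul, hwn, norm_neg, norm_mul, Complex.norm_real, Complex.norm_real,
          Real.norm_of_nonneg hΘ.le, Real.norm_of_nonneg hs', mul_one]
    rw [integral_const_mul] at hb
    calc _ ≤ 1 / (ν * Real.pi) * Θ⁻¹ *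
          (Θ * ∫ s in Set.Ioi (0 : ℝ), s ^ ν * Real.exp (-(c * s))) := by
          refine mul_le_mul_of_nonneg_left ?_ hk
          refine (Complex.abs_im_le_norm _).trans ?_
          rwa [norm_mul, hrn, one_mul]
      _ = _ := by field_simp
  · have hdom : IntegrableOn (fun s : ℝ => Real.exp (-(Θ * c) * s ^ ν)) (Set.Ioi 0) := by
      simpa using integrableOn_rpow_mul_exp_neg_mul_rpow (p := ν) (s := 0) (b := Θ * c)
        (by norm_num) h0 (by positivity)
    have hle : ∀ᵐ s ∂(volume.restrict (Set.Ioi (0 : ℝ))),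
        ‖Complex.exp (-(Θ * (s ^ ν : ℝ)) * w) * Complex.exp (-(r * s))‖ ≤
          Real.exp (-(Θ * c) * s ^ ν) := by
      filter_upwards [ae_restrict_mem measurableSet_Ioi] with s hs
      have hs' : 0 < s := hs
      rw [norm_mul, hexp, Complex.norm_exp, hzre]
      refine mul_le_of_le_one_right (Real.exp_pos _).le (Real.exp_le_one_iff.2 ?_)
      have : 0 < c * s := by positivity
      linarith
    have hint2 : IntegrableOn (fun s : ℝ =>
        Complex.exp (-(Θ * (s ^ ν : ℝ)) * w) * Complex.exp (-(r * s))) (Set.Ioi 0) :=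
      hdom.mono' (Continuous.aestronglyMeasurable (by fun_prop)) hle
    have hb := norm_integral_le_of_norm_le hdom hle
    rw [integral_exp_neg_mul_rpow h0 (by positivity),
      Real.mul_rpow hΘ.le hc.le] at hb
    have hsplit : (r * ∫ s in Set.Ioi (0 : ℝ), (Complex.exp (-(Θ * (s ^ ν : ℝ)) * w) - 1) *
        Complex.exp (-(r * s))).im = (r * ∫ s in Set.Ioi (0 : ℝ),
          Complex.exp (-(Θ * (s ^ ν : ℝ)) * w) * Complex.exp (-(r * s))).im := by
      simp_rw [sub_mul, one_mul]
      rw [integral_sub hint2 hint0, mul_sub, hone, Complex.sub_im, Complex.one_im, sub_zero]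
    have hpow : Θ ^ (-1 - 1 / ν) = Θ⁻¹ * Θ ^ (-1 / ν) := by
      rw [← Real.rpow_neg_one, ← Real.rpow_add hΘ]
      congr 1
      ring
    rw [hsplit, hpow]
    calc _ ≤ 1 / (ν * Real.pi) * Θ⁻¹ *
          (Θ ^ (-1 / ν) * c ^ (-1 / ν) * Real.Gamma (1 / ν + 1)) := by
          refine mul_le_mul_of_nonneg_left ?_ hk
          refine (Complex.abs_im_le_norm _).trans ?_
          rwa [norm_mul, hrn, one_mul]
      _ = _ := by ring

lemma measurable_phiNu (ν : ℝ) : Measurable (phiNu ν) := by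
  have h : Measurable (psiNu ν) := by
    refine Measurable.const_mul (Measurable.tsum fun n => ?_) _
    unfold wrightTerm
    fun_prop
  unfold phiNu
  exact ((measurable_id.pow_const _).const_mul _).mul (h.comp (measurable_id.pow_const _))

lemma integrableOn_phiNu {ν : ℝ} (h0 : 0 < ν) (h1 : ν < 1) :
    IntegrableOn (phiNu ν) (Set.Ioi 0) := by
  obtain ⟨C₁, C₂, hC⟩ := exists_phiNu_bound h0 h1
  have hm := measurable_phiNu ν
  rw [← Set.Ioc_union_Ioi_eq_Ioi zero_le_one]
  refine IntegrableOn.union ?_ ?_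
  · refine Integrable.mono' (g := fun _ => C₁)
      (integrableOn_const (by simp)) hm.aestronglyMeasurable ?_
    filter_upwards [ae_restrict_mem measurableSet_Ioc] with Θ hΘ using (hC Θ hΘ.1).1
  · have hexp : -1 - 1 / ν < -1 := by
      have : 0 < 1 / ν := by positivity
      linarith
    refine Integrable.mono' ((integrableOn_Ioi_rpow_of_lt hexp one_pos).const_mul C₂)
      hm.aestronglyMeasurable ?_
    filter_upwards [ae_restrict_mem measurableSet_Ioi] with Θ hΘ
    exact (hC Θ (one_pos.trans hΘ)).2

/-! ### Integrals of compact operators -/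

/-- The integral of a function with values in a closed subspace stays in it, as seen by composing
with the quotient map. No finiteness of the measure is needed. -/
lemma integral_mem_of_isClosed {E : Type*} [NormedAddCommGroup E] [NormedSpace ℂ E]
    [CompleteSpace E] {K : Submodule ℂ E} (hK : IsClosed (K : Set E))
    {α : Type*} [MeasurableSpace α] {μ : Measure α} {F : α → E}
    (hF : Integrable F μ) (hmem : ∀ᵐ a ∂μ, F a ∈ K) : ∫ a, F a ∂μ ∈ K := by
  have h := K.mkQL.integral_comp_comm hF
  have h0 : (fun a => K.mkQL (F a)) =ᵐ[μ] 0 :=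
    hmem.mono fun a ha => (Submodule.Quotient.mk_eq_zero K).2 ha
  rw [integral_eq_zero_of_ae h0] at h
  exact (Submodule.Quotient.mk_eq_zero K).1 h.symm

lemma isCompactOperator_integral {X : Type*} [NormedAddCommGroup X] [NormedSpace ℂ X]
    [CompleteSpace X] {α : Type*} [MeasurableSpace α] {μ : Measure α} {F : α → X →L[ℂ] X}
    (hF : Integrable F μ) (hcpt : ∀ᵐ a ∂μ, IsCompactOperator (F a)) :
    IsCompactOperator (∫ a, F a ∂μ : X →L[ℂ] X) := by
  let K : Submodule ℂ (X →L[ℂ] X) := compactOperator (RingHom.id ℂ) X X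
  have hK : IsClosed (K : Set (X →L[ℂ] X)) := isClosed_setOfPred_isCompactOperator
  exact integral_mem_of_isClosed hK hF hcpt

/-- If, in addition, `T(s)` is a compact operator for every `s > 0` and
`s ↦ T(s)` is continuous in the operator norm on `(0,∞)`, then for every
`t > 0` the operator `S_ν(t) : y ↦ ∫₀^∞ φ_ν(Θ) T(t^ν Θ) y dΘ` is a compact
operator on `X`. -/
theorem Snu_compact
    {X : Type*} [NormedAddCommGroup X] [NormedSpace ℂ X] [CompleteSpace X]
    (ν : ℝ) (hν : ν ∈ Set.Ioo (0 : ℝ) 1)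
    (T : ℝ → (X →L[ℂ] X))
    (hTcont : ∀ y : X, ContinuousOn (fun t => T t y) (Set.Ici 0))
    (M_T : ℝ) (hM_T : ∀ t : ℝ, 0 ≤ t → ‖T t‖ ≤ M_T)
    (hTcompact : ∀ s : ℝ, 0 < s → IsCompactOperator (T s))
    (hTnormcont : ContinuousOn T (Set.Ioi 0))
    (t : ℝ) (ht : 0 < t) :
    IsCompactOperator
      (fun y : X => ∫ Θ in Set.Ioi (0 : ℝ), phiNu ν Θ • T (t ^ ν * Θ) y) := by
  have htν : 0 < t ^ ν := Real.rpow_pos_of_pos ht ν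
  have hcont : ContinuousOn (fun Θ => T (t ^ ν * Θ)) (Set.Ioi 0) :=
    hTnormcont.comp (by fun_prop) fun Θ hΘ => mul_pos htν hΘ
  have hF : IntegrableOn (fun Θ => phiNu ν Θ • T (t ^ ν * Θ)) (Set.Ioi 0) := by
    refine Integrable.smul_bdd (integrableOn_phiNu hν.1 hν.2) M_T
      (hcont.aestronglyMeasurable measurableSet_Ioi) ?_
    filter_upwards [ae_restrict_mem measurableSet_Ioi] with Θ hΘ
    exact hM_T _ (mul_pos htν hΘ).le
  have h := isCompactOperator_integral hF (by
    filter_upwards [ae_restrict_mem measurableSet_Ioi] with Θ hΘ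
    exact (hTcompact _ (mul_pos htν hΘ)).smul (phiNu ν Θ))
  have heq : (fun y : X => ∫ Θ in Set.Ioi (0 : ℝ), phiNu ν Θ • T (t ^ ν * Θ) y) =
      (∫ Θ in Set.Ioi (0 : ℝ), phiNu ν Θ • T (t ^ ν * Θ) : X →L[ℂ] X) := by
    funext y
    rw [ContinuousLinearMap.integral_apply hF]
    rfl
  rw [heq]
  exact h
end
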